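/- For every real q with 0 < q < 1 one has 2·∏_{k=1}^∞ (1 + q^k)² = q^(−1/8) · (∑_{n∈ℤ} q^((1/2)(n+1/2)²)) / ∏_{k=1}^∞ (1 − q^k). -/

import Mathlib

open scoped BigOperators

/-!
Expanding the finite product `∏ (1 + z q^(i+1)) (1 + z⁻¹ q^i)`, `i < n`, by the `q`-binomial theorem
gives a Laurent polynomial in `z` whose `j`-th coefficient is the Gaussian binomial `[2n, n+j]_q`
times `q^(j(j+1)/2)`. These Gaussian binomials are bounded uniformly in `n` and `j` and converge to
`1 / ∏ (1 - q^k)` for each fixed `j`, so dominated convergence yields the Jacobi triple product. At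
`z = 1` the factor `1 + z⁻¹ q^0` contributes the `2`, and completing the square turns `q^(j(j+1)/2)`
into `q^(-1/8) q^((j+1/2)²/2)`.
-/

open Filter Finset Topology

section Triangular

/-- The triangular number `k(k+1)/2` of an integer `k`: the exponent of `q` in the Jacobi triple
product. It is a natural number, so that powers of `q` make sense and add up for `q = 0` too. -/
def triangular (k : ℤ) : ℕ := (k * (k + 1) / 2).toNat

lemma two_mul_natCast_triangular (k : ℤ) : 2 * (triangular k : ℤ) = k * (k + 1) := by
  have nonneg : 0 ≤ k * (k + 1) := by
    rcases le_or_gt 0 k with hk | hk <;> nlinarith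
  rw [triangular, Int.toNat_of_nonneg (Int.ediv_nonneg nonneg zero_le_two),
    Int.two_mul_ediv_two_of_even (Int.even_mul_succ_self k)]

lemma natCast_triangular {K : Type*} [Field K] [NeZero (2 : K)] (k : ℤ) :
    (triangular k : K) = k * (k + 1) / 2 := by
  rw [eq_div_iff two_ne_zero, mul_comm]
  exact_mod_cast congrArg (Int.cast : ℤ → K) (two_mul_natCast_triangular k)

lemma triangular_natCast (n : ℕ) : triangular n = (n + 1).choose 2 := by
  rw [Nat.choose_two_right, triangular, Nat.add_sub_cancel, mul_comm]
  exact_mod_cast Int.toNat_natCast _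

lemma triangular_add_one (n : ℕ) : triangular (n + 1) = triangular n + (n + 1) := by
  have := two_mul_natCast_triangular n
  have := two_mul_natCast_triangular (n + 1)
  zify
  linarith

lemma triangular_neg_add_one (k : ℤ) : triangular (-(k + 1)) = triangular k := by
  rw [triangular, triangular]
  ring_nf

lemma add_triangular_sub_add_one (k n : ℕ) :
    k + triangular (k - (n + 1)) = n + triangular (k - n) := by
  have := two_mul_natCast_triangular (k - n)
  have := two_mul_natCast_triangular (k - (n + 1))
  zify
  linarith

end Triangular

section GaussBinom

/-- The Gaussian binomial coefficient `[n, k]_q`, the `q`-analogue of `Nat.choose`. It is defined by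
its Pascal recursion, so that it makes sense over any semiring and vanishes for `n < k`. -/
def gaussBinom {R : Type*} [Semiring R] (q : R) : ℕ → ℕ → R
  | _, 0 => 1
  | 0, _ + 1 => 0
  | n + 1, k + 1 => gaussBinom q n k + q ^ (k + 1) * gaussBinom q n (k + 1)

/-- The `q`-Pochhammer symbol `(q; q)_n = (1 - q)(1 - q²)⋯(1 - qⁿ)`, which plays the role of the
factorial for Gaussian binomial coefficients. -/
def qPochhammer {R : Type*} [CommRing R] (q : R) (n : ℕ) : R := ∏ k ∈ range n, (1 - q ^ (k + 1))

lemma gaussBinom_zero_right {R : Type*} [Semiring R] (q : R) (n : ℕ) : gaussBinom q n 0 = 1 := by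
  cases n <;> rfl

lemma gaussBinom_succ_succ {R : Type*} [Semiring R] (q : R) (n k : ℕ) :
    gaussBinom q (n + 1) (k + 1) = gaussBinom q n k + q ^ (k + 1) * gaussBinom q n (k + 1) :=
  rfl

lemma gaussBinom_eq_zero_of_lt {R : Type*} [Semiring R] (q : R) {n k : ℕ} (h : n < k) :
    gaussBinom q n k = 0 := by
  induction n generalizing k with
  | zero => obtain ⟨k, rfl⟩ := Nat.exists_eq_succ_of_ne_zero h.ne'; rfl
  | succ n ih =>
    obtain ⟨k, rfl⟩ := Nat.exists_eq_succ_of_ne_zero (Nat.ne_zero_of_lt h)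
    rw [gaussBinom_succ_succ, ih (by lia), ih (by lia), mul_zero, add_zero]

lemma gaussBinom_self {R : Type*} [Semiring R] (q : R) (n : ℕ) : gaussBinom q n n = 1 := by
  induction n with
  | zero => rfl
  | succ n ih =>
    rw [gaussBinom_succ_succ, ih, gaussBinom_eq_zero_of_lt q n.lt_succ_self, mul_zero, add_zero]

lemma gaussBinom_mul_qPochhammer_mul_qPochhammer {R : Type*} [CommRing R] (q : R) (k m : ℕ) :
    gaussBinom q (k + m) k * (qPochhammer q k * qPochhammer q m) = qPochhammer q (k + m) := by
  have succ (n : ℕ) : qPochhammer q (n + 1) = qPochhammer q n * (1 - q ^ (n + 1)) :=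
    prod_range_succ _ _
  induction k generalizing m with
  | zero => simp [gaussBinom_zero_right, qPochhammer]
  | succ k ihk =>
    induction m with
    | zero => simp [gaussBinom_self, qPochhammer]
    | succ m ihm =>
      have hk := ihk (m + 1)
      rw [show k + 1 + m = k + (m + 1) by ring] at ihm
      rw [show k + 1 + (m + 1) = k + (m + 1) + 1 by ring, gaussBinom_succ_succ, succ (k + (m + 1))]
      rw [succ k] at ihm ⊢
      rw [succ m] at hk ⊢
      linear_combination (1 - q ^ (k + 1)) * hk + q ^ (k + 1) * (1 - q ^ (m + 1)) * ihm

lemma sum_gaussBinom_succ_mul {R : Type*} [CommSemiring R] (q : R) (n : ℕ) (f : ℕ → R) :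
    ∑ k ∈ range (n + 2), gaussBinom q (n + 1) k * f k =
      ∑ k ∈ range (n + 1), gaussBinom q n k * (f (k + 1) + q ^ k * f k) := by
  have last_eq_zero : gaussBinom q n (n + 1) = 0 := gaussBinom_eq_zero_of_lt q n.lt_succ_self
  have unshift : ∑ k ∈ range (n + 1), q ^ (k + 1) * gaussBinom q n (k + 1) * f (k + 1) + f 0 =
      ∑ k ∈ range (n + 1), q ^ k * gaussBinom q n k * f k := by
    simpa [gaussBinom_zero_right, last_eq_zero] using
      (sum_range_succ' (fun k ↦ q ^ k * gaussBinom q n k * f k) (n + 1)).symm.trans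
        (sum_range_succ (fun k ↦ q ^ k * gaussBinom q n k * f k) (n + 1))
  calc ∑ k ∈ range (n + 2), gaussBinom q (n + 1) k * f k
    _ = ∑ k ∈ range (n + 1), gaussBinom q n k * f (k + 1) +
        (∑ k ∈ range (n + 1), q ^ (k + 1) * gaussBinom q n (k + 1) * f (k + 1) + f 0) := by
      simp only [sum_range_succ' _ (n + 1), gaussBinom_succ_succ, gaussBinom_zero_right, one_mul,
        add_mul, sum_add_distrib, add_assoc]
    _ = ∑ k ∈ range (n + 1), gaussBinom q n k * (f (k + 1) + q ^ k * f k) := by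
      rw [unshift, ← sum_add_distrib]
      exact sum_congr rfl fun k _ ↦ by ring

theorem prod_one_add_mul_pow_eq_sum_gaussBinom {R : Type*} [CommSemiring R] (q x : R) (n : ℕ) :
    ∏ i ∈ range n, (1 + x * q ^ i) =
      ∑ k ∈ range (n + 1), gaussBinom q n k * (q ^ k.choose 2 * x ^ k) := by
  induction n generalizing x with
  | zero => simp [gaussBinom_zero_right]
  | succ n ih =>
    calc ∏ i ∈ range (n + 1), (1 + x * q ^ i)
      _ = (∏ i ∈ range n, (1 + x * q * q ^ i)) * (1 + x) := by
        simp only [prod_range_succ', pow_zero, mul_one, pow_succ', mul_assoc]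
      _ = ∑ k ∈ range (n + 1), gaussBinom q n k * (q ^ k.choose 2 * (x * q) ^ k) * (1 + x) := by
        rw [ih, sum_mul]
      _ = ∑ k ∈ range (n + 2), gaussBinom q (n + 1) k * (q ^ k.choose 2 * x ^ k) := by
        rw [sum_gaussBinom_succ_mul]
        refine sum_congr rfl fun k _ ↦ ?_
        rw [Nat.choose_succ_succ' k 1, Nat.choose_one_right]
        ring

theorem prod_mul_prod_eq_sum_gaussBinom {R : Type*} [CommSemiring R] (q z : R) (m n : ℕ) :
    (∏ i ∈ range m, (1 + z * q ^ (i + 1))) * ∏ i ∈ range n, (z + q ^ i) =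
      ∑ k ∈ range (m + n + 1), gaussBinom q (m + n) k * (q ^ triangular (k - n) * z ^ k) := by
  induction n with
  | zero =>
    have h := prod_one_add_mul_pow_eq_sum_gaussBinom q (z * q) m
    simp only [mul_assoc, ← pow_succ'] at h
    rw [prod_range_zero, mul_one, add_zero, h]
    refine sum_congr rfl fun k _ ↦ ?_
    rw [Nat.cast_zero, sub_zero, triangular_natCast, Nat.choose_succ_succ' k 1,
      Nat.choose_one_right]
    ring
  | succ n ih =>
    rw [prod_range_succ, ← mul_assoc, ih, sum_mul, ← add_assoc, sum_gaussBinom_succ_mul]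
    refine sum_congr rfl fun k _ ↦ ?_
    have shift : ((k + 1 : ℕ) : ℤ) - (n + 1 : ℕ) = k - n := by push_cast; ring
    have pow_eq : q ^ k * q ^ triangular (k - (n + 1 : ℕ)) = q ^ n * q ^ triangular (k - n) := by
      rw [← pow_add, ← pow_add, Nat.cast_succ, add_triangular_sub_add_one]
    rw [shift, ← mul_assoc (q ^ k), pow_eq]
    ring

theorem prod_mul_prod_eq_sum_Icc_gaussBinom {K : Type*} [Field K] (q : K) {z : K} (hz : z ≠ 0)
    (n : ℕ) :
    (∏ i ∈ range n, (1 + z * q ^ (i + 1))) * ∏ i ∈ range n, (1 + z⁻¹ * q ^ i) =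
      ∑ j ∈ Icc (-n : ℤ) n,
        gaussBinom q (n + n) (n + j).toNat * (q ^ triangular j * z ^ j) := by
  have clear_inv : ∏ i ∈ range n, (1 + z⁻¹ * q ^ i) = z⁻¹ ^ n * ∏ i ∈ range n, (z + q ^ i) := by
    rw [← card_range n, ← prod_const, card_range, ← prod_mul_distrib]
    exact prod_congr rfl fun i _ ↦ by field_simp
  rw [clear_inv, mul_left_comm, prod_mul_prod_eq_sum_gaussBinom, mul_sum]
  refine sum_nbij' (fun k ↦ (k : ℤ) - n) (fun j ↦ (n + j).toNat) ?_ ?_ ?_ ?_ fun k _ ↦ ?_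
  · simp only [mem_range, mem_Icc]; lia
  · simp only [mem_range, mem_Icc]; lia
  · simp only [mem_range]; lia
  · simp only [mem_Icc]; lia
  · rw [add_sub_cancel, Int.toNat_natCast, zpow_sub₀ hz, zpow_natCast, zpow_natCast, inv_pow]
    ring

end GaussBinom

lemma tendsto_sum_of_dominated_convergence {ι β G : Type*} {l : Filter ι} [NormedAddCommGroup G]
    [CompleteSpace G] {s : ι → Finset β} {f : ι → β → G} {g : β → G} {bound : β → ℝ}
    (hs : Tendsto s l atTop) (h_sum : Summable bound) (hfg : ∀ b, Tendsto (f · b) l (𝓝 (g b)))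
    (h_bound : ∀ᶠ i in l, ∀ b, ‖f i b‖ ≤ bound b) :
    Tendsto (fun i ↦ ∑ b ∈ s i, f i b) l (𝓝 (∑' b, g b)) := by
  simp only [fun i ↦ sum_eq_tsum_indicator (f i) (s i)]
  refine tendsto_tsum_of_dominated_convergence h_sum (fun b ↦ (hfg b).congr' ?_) ?_
  · filter_upwards [hs.eventually_ge_atTop {b}] with i hi
    exact (Set.indicator_of_mem (mem_coe.2 (singleton_subset_iff.1 hi)) (f i)).symm
  · filter_upwards [h_bound] with i hi b
    exact (norm_indicator_le_norm_self (f i) b).trans (hi b)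

section Convergence

variable {𝕜 : Type*} [NormedField 𝕜] {q : 𝕜}

lemma one_sub_pow_ne_zero (hq : ‖q‖ < 1) {k : ℕ} (hk : k ≠ 0) : 1 - q ^ k ≠ 0 := by
  refine sub_ne_zero.2 fun h ↦ (pow_lt_one₀ (norm_nonneg q) hq hk).ne ?_
  rw [← norm_pow, ← h, norm_one]

lemma qPochhammer_ne_zero (hq : ‖q‖ < 1) (n : ℕ) : qPochhammer q n ≠ 0 :=
  prod_ne_zero_iff.2 fun k _ ↦ one_sub_pow_ne_zero hq k.succ_ne_zero

lemma gaussBinom_add_eq_div (hq : ‖q‖ < 1) (k m : ℕ) :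
    gaussBinom q (k + m) k = qPochhammer q (k + m) / (qPochhammer q k * qPochhammer q m) :=
  eq_div_of_mul_eq (mul_ne_zero (qPochhammer_ne_zero hq k) (qPochhammer_ne_zero hq m))
    (gaussBinom_mul_qPochhammer_mul_qPochhammer q k m)

variable [CompleteSpace 𝕜]

lemma multipliable_one_add_mul_pow (hq : ‖q‖ < 1) (z : 𝕜) :
    Multipliable fun k : ℕ ↦ 1 + z * q ^ k := by
  refine multipliable_one_add_of_summable ?_
  simpa only [norm_mul, norm_pow] using
    (summable_geometric_of_lt_one (norm_nonneg q) hq).mul_left ‖z‖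

lemma multipliable_one_add_mul_pow_succ (hq : ‖q‖ < 1) (z : 𝕜) :
    Multipliable fun k : ℕ ↦ 1 + z * q ^ (k + 1) := by
  simpa only [mul_assoc, ← pow_succ'] using multipliable_one_add_mul_pow hq (z * q)

lemma tendsto_qPochhammer (hq : ‖q‖ < 1) :
    Tendsto (qPochhammer q) atTop (𝓝 (∏' k : ℕ, (1 - q ^ (k + 1)))) := by
  have multipliable : Multipliable fun k : ℕ ↦ 1 - q ^ (k + 1) := by
    simpa only [neg_one_mul, ← sub_eq_add_neg] using multipliable_one_add_mul_pow_succ hq (-1)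
  exact multipliable.tendsto_prod_tprod_nat

lemma tprod_one_sub_pow_succ_ne_zero (hq : ‖q‖ < 1) : ∏' k : ℕ, (1 - q ^ (k + 1)) ≠ 0 := by
  simp only [sub_eq_add_neg]
  refine tprod_one_add_ne_zero_of_summable (fun k ↦ ?_) ?_
  · simpa only [← sub_eq_add_neg] using one_sub_pow_ne_zero hq k.succ_ne_zero
  · simpa only [norm_neg, norm_pow] using
      (summable_nat_add_iff 1).2 (summable_geometric_of_lt_one (norm_nonneg q) hq)

lemma exists_norm_gaussBinom_le (hq : ‖q‖ < 1) : ∃ C, ∀ n k, ‖gaussBinom q n k‖ ≤ C := by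
  have tendsto := tendsto_qPochhammer hq
  obtain ⟨A, hA⟩ := tendsto.norm.bddAbove_range
  obtain ⟨B, hB⟩ := (tendsto.inv₀ (tprod_one_sub_pow_succ_ne_zero hq)).norm.bddAbove_range
  replace hA n : ‖qPochhammer q n‖ ≤ A := hA ⟨n, rfl⟩
  replace hB n : ‖(qPochhammer q n)⁻¹‖ ≤ B := hB ⟨n, rfl⟩
  have A_nonneg : 0 ≤ A := (norm_nonneg _).trans (hA 0)
  have B_nonneg : 0 ≤ B := (norm_nonneg _).trans (hB 0)
  refine ⟨A * (B * B), fun n k ↦ ?_⟩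
  rcases lt_or_ge n k with hnk | hkn
  · rw [gaussBinom_eq_zero_of_lt q hnk, norm_zero]
    positivity
  · obtain ⟨m, rfl⟩ := Nat.exists_eq_add_of_le hkn
    rw [gaussBinom_add_eq_div hq, div_eq_mul_inv, mul_inv, norm_mul, norm_mul]
    gcongr
    exacts [hA _, hB _, hB _]

lemma tendsto_gaussBinom_add {ι : Type*} {l : Filter ι} {u v : ι → ℕ} (hq : ‖q‖ < 1)
    (hu : Tendsto u l atTop) (hv : Tendsto v l atTop) :
    Tendsto (fun i ↦ gaussBinom q (u i + v i) (u i)) l (𝓝 (∏' k : ℕ, (1 - q ^ (k + 1)))⁻¹) := by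
  have tendsto := tendsto_qPochhammer hq
  have ne_zero := tprod_one_sub_pow_succ_ne_zero hq
  simp only [gaussBinom_add_eq_div hq]
  rw [← div_mul_cancel_left₀ ne_zero]
  exact (tendsto.comp (hu.atTop_add_atTop hv)).div ((tendsto.comp hu).mul (tendsto.comp hv))
    (mul_ne_zero ne_zero ne_zero)

lemma tendsto_gaussBinom_toNat_add (hq : ‖q‖ < 1) (j : ℤ) :
    Tendsto (fun n : ℕ ↦ gaussBinom q (n + n) (n + j).toNat) atTop
      (𝓝 (∏' k : ℕ, (1 - q ^ (k + 1)))⁻¹) := by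
  have toNat_add (i : ℤ) : Tendsto (fun n : ℕ ↦ (n + i).toNat) atTop atTop :=
    tendsto_atTop_mono (fun n ↦ by lia) (tendsto_sub_atTop_nat i.natAbs)
  refine (tendsto_gaussBinom_add hq (toNat_add j) (toNat_add (-j))).congr' ?_
  filter_upwards [eventually_ge_atTop j.natAbs] with n hn
  congr 1
  lia

lemma summable_pow_triangular_mul_pow (hq : ‖q‖ < 1) (z : 𝕜) :
    Summable fun n : ℕ ↦ q ^ triangular n * z ^ n := by
  have ratio_tendsto : Tendsto (fun n : ℕ ↦ ‖q ^ (n + 1) * z‖) atTop (𝓝 0) := by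
    simpa using (((tendsto_pow_atTop_nhds_zero_of_norm_lt_one hq).comp
      (tendsto_add_atTop_nat 1)).mul_const z).norm
  refine summable_of_ratio_norm_eventually_le one_half_lt_one ?_
  filter_upwards [ratio_tendsto.eventually_le_const one_half_pos] with n hn
  calc ‖q ^ triangular (n + 1 : ℕ) * z ^ (n + 1)‖
    _ = ‖q ^ (n + 1) * z‖ * ‖q ^ triangular n * z ^ n‖ := by
      rw [← norm_mul, Nat.cast_succ, triangular_add_one]
      ring_nf
    _ ≤ 1 / 2 * ‖q ^ triangular n * z ^ n‖ := by gcongr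

lemma summable_pow_triangular_mul_zpow (hq : ‖q‖ < 1) (z : 𝕜) :
    Summable fun j : ℤ ↦ q ^ triangular j * z ^ j := by
  refine .of_nat_of_neg_add_one ?_ ?_
  · simpa only [zpow_natCast] using summable_pow_triangular_mul_pow hq z
  · refine ((summable_pow_triangular_mul_pow hq z⁻¹).mul_left z⁻¹).congr fun n ↦ ?_
    rw [triangular_neg_add_one, zpow_neg, ← Nat.cast_succ, zpow_natCast, pow_succ, mul_inv, inv_pow]
    ring

theorem jacobi_triple_product (hq : ‖q‖ < 1) {z : 𝕜} (hz : z ≠ 0) :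
    (∏' k : ℕ, (1 + z * q ^ (k + 1))) * ∏' k : ℕ, (1 + z⁻¹ * q ^ k) =
      (∑' j : ℤ, q ^ triangular j * z ^ j) / ∏' k : ℕ, (1 - q ^ (k + 1)) := by
  obtain ⟨C, hC⟩ := exists_norm_gaussBinom_le hq
  have summable_bound : Summable fun j : ℤ ↦ C * (‖q‖ ^ triangular j * ‖z‖ ^ j) :=
    (summable_pow_triangular_mul_zpow (by rwa [norm_norm]) ‖z‖).mul_left C
  have term_tendsto (j : ℤ) := (tendsto_gaussBinom_toNat_add hq j).mul_const
    (q ^ triangular j * z ^ j)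
  have norm_term_le (n : ℕ) (j : ℤ) :
      ‖gaussBinom q (n + n) (n + j).toNat * (q ^ triangular j * z ^ j)‖ ≤
        C * (‖q‖ ^ triangular j * ‖z‖ ^ j) := by
    rw [norm_mul, norm_mul, norm_pow, norm_zpow]
    gcongr
    exact hC _ _
  have sum_tendsto := tendsto_sum_of_dominated_convergence (tendsto_Icc_neg (R := ℤ))
    summable_bound term_tendsto (.of_forall norm_term_le)
  have prod_tendsto := (multipliable_one_add_mul_pow_succ hq z).tendsto_prod_tprod_nat.mul
    (multipliable_one_add_mul_pow hq z⁻¹).tendsto_prod_tprod_nat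
  simp only [prod_mul_prod_eq_sum_Icc_gaussBinom q hz] at prod_tendsto
  rw [tendsto_nhds_unique prod_tendsto sum_tendsto, tsum_mul_left, inv_mul_eq_div]

theorem stmt6_general (hq : ‖q‖ < 1) :
    2 * ∏' k : ℕ, (1 + q ^ (k + 1)) ^ 2 =
      (∑' j : ℤ, q ^ triangular j) / ∏' k : ℕ, (1 - q ^ (k + 1)) := by
  have multipliable : Multipliable fun k : ℕ ↦ 1 + q ^ (k + 1) := by
    simpa only [one_mul] using multipliable_one_add_mul_pow_succ hq 1
  have split_first : ∏' k : ℕ, (1 + q ^ k) = 2 * ∏' k : ℕ, (1 + q ^ (k + 1)) := by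
    rw [tprod_eq_zero_mul' (f := fun k ↦ 1 + q ^ k) multipliable, pow_zero, one_add_one_eq_two]
  have triple := jacobi_triple_product hq one_ne_zero
  simp only [inv_one, one_mul, one_zpow, mul_one, split_first] at triple
  rw [multipliable.tprod_pow, ← triple]
  ring

end Convergence

lemma rpow_neg_eighth_mul_rpow_half_mul_sq {q : ℝ} (hq : 0 < q) (n : ℤ) :
    q ^ (-(1 / 8) : ℝ) * q ^ ((1 / 2 : ℝ) * ((n : ℝ) + 1 / 2) ^ 2) = q ^ triangular n := by
  rw [← Real.rpow_add hq, ← Real.rpow_natCast q, natCast_triangular]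
  ring_nf

/-- Bosonization of two Ramond fermions (Jacobi triple product consequence):
    `2·∏_{k=1}^∞ (1+q^k)² = q^(−1/8) · (∑_{n∈ℤ} q^((1/2)(n+1/2)²)) / ∏_{k=1}^∞ (1−q^k)`. -/
theorem stmt6 (q : ℝ) (hq0 : 0 < q) (hq1 : q < 1) :
    2 * ∏' k : ℕ, (1 + q ^ (k + 1)) ^ 2 =
      q ^ (-(1 / 8) : ℝ) * (∑' n : ℤ, q ^ ((1 / 2 : ℝ) * ((n : ℝ) + 1 / 2) ^ 2)) /
        ∏' k : ℕ, (1 - q ^ (k + 1)) := by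
  rw [stmt6_general (by rwa [Real.norm_of_nonneg hq0.le]), ← tsum_mul_left]
  simp only [rpow_neg_eighth_mul_rpow_half_mul_sq hq0]
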